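/- Let v ∈ ℝ⁴ be a fixed vector. For every x and r > 0 such that B̄_{x'}(r) ⊆ Ω for all x' in a neighborhood of x, the function x ↦ D_φ(x,r) is differentiable in the direction v and ∂_v D_φ(x,r) = −(2/r) ∫ φ'(|y−x|/r) ⟨∂_{ν_x}u(y), ∂_v u(y)⟩ dy. -/

import Mathlib

open Metric MeasureTheory
open scoped RealInnerProductSpace

noncomputable section

abbrev E4 := EuclideanSpace ℝ (Fin 4)

variable {E : Type*} [NormedAddCommGroup E] [InnerProductSpace ℝ E] [FiniteDimensional ℝ E]

/-- `u` is smooth and harmonic (the Laplacian, i.e. the sum of the pure second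
derivatives in the coordinate directions, vanishes) on `Ω`. -/
def IsHarmonicOn (u : E4 → E) (Ω : Set E4) : Prop :=
  ContDiffOn ℝ (⊤ : ℕ∞) u Ω ∧
  ∀ x ∈ Ω, ∑ i : Fin 4,
    iteratedFDeriv ℝ 2 u x ![EuclideanSpace.single i (1:ℝ), EuclideanSpace.single i 1] = 0

/-- `|∇u(y)|²`, the squared Frobenius norm of the derivative of `u` at `y`. -/
def gradSq (u : E4 → E) (y : E4) : ℝ :=
  ∑ i : Fin 4, ‖fderiv ℝ u y (EuclideanSpace.single i (1:ℝ))‖ ^ 2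

/-- `D_φ(x,r) = ∫ |∇u(y)|² φ(|y−x|/r) dy`. -/
def Dphi (φ : ℝ → ℝ) (u : E4 → E) (x : E4) (r : ℝ) : ℝ :=
  ∫ y, gradSq u y * φ (‖y - x‖ / r)

/-- `H_φ(x,r) = −∫ |u(y)|² |y−x|⁻¹ φ'(|y−x|/r) dy`. -/
def Hphi (φ : ℝ → ℝ) (u : E4 → E) (x : E4) (r : ℝ) : ℝ :=
  -∫ y, ‖u y‖ ^ 2 * ‖y - x‖⁻¹ * deriv φ (‖y - x‖ / r)

/-- `E_φ(x,r) = −∫ |∂_{ν_x}u(y)|² |y−x| φ'(|y−x|/r) dy`, where `ν_x(y) = (y−x)/|y−x|`. -/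
def Ephi (φ : ℝ → ℝ) (u : E4 → E) (x : E4) (r : ℝ) : ℝ :=
  -∫ y, ‖fderiv ℝ u y (‖y - x‖⁻¹ • (y - x))‖ ^ 2 * ‖y - x‖ * deriv φ (‖y - x‖ / r)

/-- The smoothed frequency `N_φ(x,r) = r D_φ(x,r) / H_φ(x,r)`. -/
def Nphi (φ : ℝ → ℝ) (u : E4 → E) (x : E4) (r : ℝ) : ℝ :=
  r * Dphi φ u x r / Hphi φ u x r


lemma aux_second (u : E4 → E) (hu : ContDiff ℝ (⊤ : ℕ∞) u) (w a y : E4) :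
    HasFDerivAt (fun z => fderiv ℝ u z w) ((fderiv ℝ (fderiv ℝ u) y).flip w) y := by
  have h1 : ContDiff ℝ 1 (fderiv ℝ u) := hu.fderiv_right (by norm_cast)
  have h2 : HasFDerivAt (fderiv ℝ u) (fderiv ℝ (fderiv ℝ u) y) y :=
    (h1.differentiable (by norm_num) y).hasFDerivAt
  have := h2.clm_apply (hasFDerivAt_const w y)
  refine this.congr_fderiv ?_
  ext; simp

lemma aux_contDiff (u : E4 → E) (hu : ContDiff ℝ (⊤ : ℕ∞) u) (w : E4) :
    ContDiff ℝ 1 (fun z => fderiv ℝ u z w) :=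
  (hu.fderiv_right (by norm_cast)).clm_apply contDiff_const

lemma aux_parts (G Ψ : E4 → ℝ) (hG : ContDiff ℝ 1 G) (hΨ : ContDiff ℝ 1 Ψ)
    (hc : HasCompactSupport Ψ) (w : E4) :
    ∫ y, G y * fderiv ℝ Ψ y w = -∫ y, fderiv ℝ G y w * Ψ y := by
  have hG' : Continuous fun y => fderiv ℝ G y w :=
    (hG.continuous_fderiv (by norm_num)).clm_apply continuous_const
  have hΨ' : Continuous fun y => fderiv ℝ Ψ y w :=
    (hΨ.continuous_fderiv (by norm_num)).clm_apply continuous_const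
  apply integral_mul_fderiv_eq_neg_fderiv_mul_of_integrable
  · exact (hG'.mul hΨ.continuous).integrable_of_hasCompactSupport hc.mul_left
  · exact (hG.continuous.mul hΨ').integrable_of_hasCompactSupport (hc.fderiv_apply ℝ w).mul_left
  · exact (hG.continuous.mul hΨ.continuous).integrable_of_hasCompactSupport hc.mul_left
  · exact fun x _ => hG.differentiable (by norm_num) x
  · exact fun x _ => hΨ.differentiable (by norm_num) x

lemma aux_gradSq_contDiff (u : E4 → E) (hu : ContDiff ℝ (⊤ : ℕ∞) u) :
    ContDiff ℝ 1 (gradSq u) := by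
  unfold gradSq
  exact ContDiff.sum fun i _ => (aux_contDiff u hu _).norm_sq ℝ

lemma aux_identity (u : E4 → E) (hu : ContDiff ℝ (⊤ : ℕ∞) u) (Ψ : E4 → ℝ)
    (hΨ : ContDiff ℝ 1 Ψ) (hc : HasCompactSupport Ψ)
    (hh : ∀ y, Ψ y ≠ 0 → ∑ i : Fin 4,
      iteratedFDeriv ℝ 2 u y ![EuclideanSpace.single i (1:ℝ), EuclideanSpace.single i 1] = 0)
    (v : E4) :
    ∫ y, gradSq u y * fderiv ℝ Ψ y v =
      2 * ∫ y, ∑ i : Fin 4, ⟪fderiv ℝ u y (EuclideanSpace.single i (1:ℝ)), fderiv ℝ u y v⟫ *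
        fderiv ℝ Ψ y (EuclideanSpace.single i (1:ℝ)) := by
  set e : Fin 4 → E4 := fun i => EuclideanSpace.single i (1:ℝ) with he
  have hcd : ∀ i, ContDiff ℝ 1 (fun y => ⟪fderiv ℝ u y (e i), fderiv ℝ u y v⟫) :=
    fun i => (aux_contDiff u hu _).inner ℝ (aux_contDiff u hu _)
  have hΨ' : ∀ w, Continuous fun y => fderiv ℝ Ψ y w := fun w =>
    (hΨ.continuous_fderiv (by norm_num)).clm_apply continuous_const
  have hh' : ∀ i w, Continuous fun y =>
      fderiv ℝ (fun y => ⟪fderiv ℝ u y (e i), fderiv ℝ u y v⟫) y w := fun i w =>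
    ((hcd i).continuous_fderiv (by norm_num)).clm_apply continuous_const
  rw [aux_parts _ _ (aux_gradSq_contDiff u hu) hΨ hc]
  have i1 : ∀ i ∈ Finset.univ, Integrable (fun y =>
      ⟪fderiv ℝ u y (e i), fderiv ℝ u y v⟫ * fderiv ℝ Ψ y (e i)) := fun i _ =>
    ((hcd i).continuous.mul (hΨ' (e i))).integrable_of_hasCompactSupport
      (hc.fderiv_apply ℝ (e i)).mul_left
  have i2 : ∀ i ∈ Finset.univ, Integrable (fun y =>
      fderiv ℝ (fun y => ⟪fderiv ℝ u y (e i), fderiv ℝ u y v⟫) y (e i) * Ψ y) := fun i _ =>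
    ((hh' i (e i)).mul hΨ.continuous).integrable_of_hasCompactSupport hc.mul_left
  rw [integral_finsetSum _ i1]
  rw [Finset.sum_congr rfl (fun i _ => aux_parts _ _ (hcd i) hΨ hc (e i))]
  rw [Finset.sum_neg_distrib, ← integral_finsetSum _ i2]
  rw [mul_neg, ← integral_const_mul]
  congr 1
  apply integral_congr_ae
  refine Filter.Eventually.of_forall fun y => ?_
  simp only
  by_cases hy : Ψ y = 0
  · simp [hy]
  have h0 := hh y hy
  simp only [iteratedFDeriv_two_apply, Matrix.cons_val_zero, Matrix.cons_val_one] at h0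
  have hs : IsSymmSndFDerivAt ℝ u y := hu.contDiffAt.isSymmSndFDerivAt (by simp; norm_cast)
  have hG : fderiv ℝ (gradSq u) y v =
      ∑ i, 2 * ⟪fderiv ℝ u y (e i), fderiv ℝ (fderiv ℝ u) y v (e i)⟫ := by
    have : HasFDerivAt (gradSq u) _ y :=
      HasFDerivAt.fun_sum (u := Finset.univ) fun i _ => (aux_second u hu (e i) 0 y).norm_sq
    rw [this.fderiv]
    simp
  have hI : ∀ i, fderiv ℝ (fun y => ⟪fderiv ℝ u y (e i), fderiv ℝ u y v⟫) y (e i) =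
      ⟪fderiv ℝ u y (e i), fderiv ℝ (fderiv ℝ u) y v (e i)⟫ +
      ⟪fderiv ℝ (fderiv ℝ u) y (e i) (e i), fderiv ℝ u y v⟫ := by
    intro i
    rw [((aux_second u hu (e i) 0 y).inner ℝ (aux_second u hu v 0 y)).fderiv]
    simp [hs.eq v (e i)]
  rw [hG]
  simp only [hI]
  rw [← Finset.sum_mul, Finset.sum_add_distrib, ← sum_inner, h0, inner_zero_left, add_zero,
    ← Finset.mul_sum, mul_assoc]

lemma aux_norm (z : E4) (hz : z ≠ 0) :
    HasFDerivAt (fun z : E4 => ‖z‖) (‖z‖⁻¹ • innerSL ℝ z) z := by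
  have h := (hasStrictFDerivAt_norm_sq z).hasFDerivAt.sqrt (by simp [hz])
  simp only [Real.sqrt_sq (norm_nonneg _)] at h
  refine h.congr_fderiv ?_
  ext w
  simp
  field_simp

lemma aux_psi_contDiff (φ : ℝ → ℝ) (hφs : ContDiff ℝ (⊤ : ℕ∞) φ)
    (hφ1 : ∀ t ≤ (3/4 : ℝ), φ t = 1) (r : ℝ) (hr : 0 < r) :
    ContDiff ℝ 1 (fun z : E4 => φ (‖z‖ / r)) := by
  rw [contDiff_iff_contDiffAt]
  intro z
  by_cases hz : z = 0
  · subst hz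
    have : (fun z : E4 => φ (‖z‖ / r)) =ᶠ[nhds 0] fun _ => 1 := by
      filter_upwards [Metric.ball_mem_nhds (0 : E4) (show 0 < r / 2 by positivity)] with z hz
      apply hφ1
      rw [mem_ball_zero_iff] at hz
      rw [div_le_iff₀ hr]; linarith
    exact contDiffAt_const.congr_of_eventuallyEq this
  · have h1 : ContDiffAt ℝ 1 φ (‖z‖ / r) := (hφs.of_le (by norm_cast)).contDiffAt
    exact ContDiffAt.comp z (f := fun z : E4 => ‖z‖ / r) h1 ((contDiffAt_norm ℝ hz).div_const r)

lemma aux_psi_fderiv (φ : ℝ → ℝ) (hφs : ContDiff ℝ (⊤ : ℕ∞) φ)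
    (hφ1 : ∀ t ≤ (3/4 : ℝ), φ t = 1) (r : ℝ) (hr : 0 < r) (z w : E4) :
    fderiv ℝ (fun z : E4 => φ (‖z‖ / r)) z w =
      deriv φ (‖z‖ / r) * (r⁻¹ * (‖z‖⁻¹ * ⟪z, w⟫)) := by
  by_cases hz : z = 0
  · subst hz
    have : (fun z : E4 => φ (‖z‖ / r)) =ᶠ[nhds 0] fun _ => 1 := by
      filter_upwards [Metric.ball_mem_nhds (0 : E4) (show 0 < r / 2 by positivity)] with z hz
      apply hφ1
      rw [mem_ball_zero_iff] at hz
      rw [div_le_iff₀ hr]; linarith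
    rw [this.fderiv_eq]
    simp
  · have h1 : HasDerivAt φ (deriv φ (‖z‖ / r)) (‖z‖ / r) :=
      (hφs.differentiable (by simp) _).hasDerivAt
    have h2 : HasFDerivAt (fun z : E4 => ‖z‖ / r) (r⁻¹ • (‖z‖⁻¹ • innerSL ℝ z)) z := by
      simpa [div_eq_mul_inv] using (aux_norm z hz).mul_const r⁻¹
    have h3 := h1.comp_hasFDerivAt z h2
    have h4 : fderiv ℝ (fun z : E4 => φ (‖z‖ / r)) z = _ := h3.fderiv
    rw [h4]
    simp

lemma aux_global (φ : ℝ → ℝ) (hφs : ContDiff ℝ (⊤ : ℕ∞) φ)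
    (hφ1 : ∀ t ≤ (3/4 : ℝ), φ t = 1) (hφ0 : ∀ t, (1:ℝ) ≤ t → φ t = 0)
    (u : E4 → E) (hu : ContDiff ℝ (⊤ : ℕ∞) u)
    (v : E4) (x : E4) (r : ℝ) (hr : 0 < r)
    (hh : ∀ y ∈ closedBall x r, ∑ i : Fin 4,
      iteratedFDeriv ℝ 2 u y ![EuclideanSpace.single i (1:ℝ), EuclideanSpace.single i 1] = 0) :
    HasDerivAt (fun t : ℝ => Dphi φ u (x + t • v) r)
      (-(2 / r) * ∫ y, deriv φ (‖y - x‖ / r) *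
        ⟪fderiv ℝ u y (‖y - x‖⁻¹ • (y - x)), fderiv ℝ u y v⟫) 0 := by
  set ψ : E4 → ℝ := fun z => φ (‖z‖ / r) with hψ
  have hψs : ContDiff ℝ 1 ψ := aux_psi_contDiff φ hφs hφ1 r hr
  have hψ0 : ∀ z, ψ z ≠ 0 → ‖z‖ ≤ r := by
    intro z hz
    by_contra hlt
    exact hz (hφ0 _ (by rw [le_div_iff₀ hr]; linarith))
  have hψc : HasCompactSupport ψ :=
    HasCompactSupport.of_support_subset_isCompact (isCompact_closedBall 0 r)
      (fun z hz => by simpa using hψ0 z hz)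
  set Ψ : E4 → ℝ := fun y => ψ (y - x) with hΨ
  have hΨs : ContDiff ℝ 1 Ψ := hψs.comp (contDiff_id.sub contDiff_const)
  have hΨc : HasCompactSupport Ψ :=
    HasCompactSupport.of_support_subset_isCompact (isCompact_closedBall x r)
      (fun z hz => by simpa [dist_eq_norm] using hψ0 (z - x) hz)
  have hΨd : ∀ y w, fderiv ℝ Ψ y w =
      deriv φ (‖y - x‖ / r) * (r⁻¹ * (‖y - x‖⁻¹ * ⟪y - x, w⟫)) := by
    intro y w
    rw [hΨ, fderiv_comp_sub, aux_psi_fderiv φ hφs hφ1 r hr]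
  have hG := aux_gradSq_contDiff u hu
  have hconv := hψc.hasFDerivAt_convolution_right (ContinuousLinearMap.mul ℝ ℝ)
    (μ := volume) (hG.continuous.locallyIntegrable) hψs x
  have hD : ∀ x', Dphi φ u x' r =
      convolution (gradSq u) ψ (ContinuousLinearMap.mul ℝ ℝ) volume x' := by
    intro x'
    simp only [Dphi, convolution, hψ, norm_sub_rev x', ContinuousLinearMap.mul_apply']
  have hline : HasDerivAt (fun t : ℝ => x + t • v) v 0 := by
    simpa using ((hasDerivAt_id (0:ℝ)).smul_const v).const_add x
  have hfin := HasFDerivAt.comp_hasDerivAt_of_eq (0:ℝ) hconv hline (by simp)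
  simp only [hD]
  refine HasDerivAt.congr_deriv hfin (Eq.symm ?_)
  rw [convolution_precompR_apply _ hG.continuous.locallyIntegrable
    (hψc.fderiv ℝ) (hψs.continuous_fderiv (by norm_num))]
  simp only [convolution, ContinuousLinearMap.mul_apply']
  have e1 : ∀ y, fderiv ℝ ψ (x - y) v = - fderiv ℝ Ψ y v := by
    intro y
    rw [hΨd, hψ, aux_psi_fderiv φ hφs hφ1 r hr, norm_sub_rev x, ← neg_sub y x, inner_neg_left]
    ring
  simp only [e1, mul_neg, integral_neg]
  rw [aux_identity u hu Ψ hΨs hΨc (fun y hy => hh y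
    (by simpa [dist_eq_norm] using hψ0 (y - x) hy)) v]
  rw [neg_mul, div_eq_mul_inv, mul_assoc, ← integral_const_mul]
  congr 3
  ext y
  have hsum : y - x = ∑ i : Fin 4, (y - x) i • EuclideanSpace.single i (1:ℝ) := by
    simpa using ((EuclideanSpace.basisFun (Fin 4) ℝ).sum_repr (y - x)).symm
  have hin : ∀ i : Fin 4, ⟪y - x, EuclideanSpace.single i (1:ℝ)⟫ = (y - x) i := by
    intro i
    simp [EuclideanSpace.inner_single_right]
  simp only [hΨd, hin]
  rw [map_smul, inner_smul_left]
  conv_lhs => rw [hsum]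
  rw [map_sum, sum_inner, Finset.mul_sum, Finset.mul_sum, Finset.mul_sum]
  rw [← hsum]
  refine Finset.sum_congr rfl fun i _ => ?_
  rw [map_smul, inner_smul_left]
  simp
  ring

/-- Flat-case identity (4.3):
`∂_v D_φ(x,r) = −(2/r) ∫ φ'(|y−x|/r) ⟨∂_{ν_x}u(y), ∂_v u(y)⟩ dy`. -/
theorem stmt_9 (φ : ℝ → ℝ) (hφs : ContDiff ℝ (⊤ : ℕ∞) φ) (hφa : Antitone φ)
    (hφ1 : ∀ t ≤ (3/4 : ℝ), φ t = 1) (hφ0 : ∀ t, (1:ℝ) ≤ t → φ t = 0)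
    (Ω : Set E4) (hΩ : IsOpen Ω) (u : E4 → E) (hu : IsHarmonicOn u Ω)
    (v : E4) (x : E4) (r : ℝ) (hr : 0 < r)
    (hball : ∀ᶠ x' in nhds x, closedBall x' r ⊆ Ω) :
    HasDerivAt (fun t : ℝ => Dphi φ u (x + t • v) r)
      (-(2 / r) * ∫ y, deriv φ (‖y - x‖ / r) *
        ⟪fderiv ℝ u y (‖y - x‖⁻¹ • (y - x)), fderiv ℝ u y v⟫) 0 := by
  have hK : closedBall x r ⊆ Ω := hball.self_of_nhds
  obtain ⟨δ, hδ, hδΩ⟩ := (isCompact_closedBall x r).exists_cthickening_subset_open hΩ hK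
  rw [cthickening_closedBall hδ.le hr.le] at hδΩ
  let χ : ContDiffBump x := ⟨r + δ / 2, δ + r, by positivity, by linarith⟩
  set w : E4 → E := fun y => χ y • u y with hw
  have hws : ContDiff ℝ (⊤ : ℕ∞) w := by
    rw [contDiff_iff_contDiffAt]
    intro y
    by_cases hy : y ∈ Ω
    · exact χ.contDiffAt.smul (hu.1.contDiffAt (hΩ.mem_nhds hy))
    · have hy' : y ∈ (closedBall x (δ + r))ᶜ := fun h => hy (hδΩ h)
      have : w =ᶠ[nhds y] fun _ => 0 := by
        filter_upwards [isClosed_closedBall.isOpen_compl.mem_nhds hy'] with z hz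
        have : χ z = 0 := χ.zero_of_le_dist (by
          simp only [Set.mem_compl_iff, mem_closedBall, not_le] at hz
          exact hz.le)
        simp [hw, this]
      exact contDiffAt_const.congr_of_eventuallyEq this
  have hwu : ∀ y ∈ ball x (r + δ / 2), w =ᶠ[nhds y] u := by
    intro y hy
    filter_upwards [isOpen_ball.mem_nhds hy] with z hz
    have : χ z = 1 := χ.one_of_mem_closedBall (ball_subset_closedBall hz)
    simp [hw, this]
  have hsub : closedBall x r ⊆ ball x (r + δ / 2) := closedBall_subset_ball (by linarith)
  have main := aux_global φ hφs hφ1 hφ0 w hws v x r hr (by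
    intro y hy
    have h := (hwu y (hsub hy)).iteratedFDeriv ℝ 2
    rw [h.self_of_nhds]
    exact hu.2 y (hK hy))
  have hint : ∀ y, deriv φ (‖y - x‖ / r) *
        ⟪fderiv ℝ w y (‖y - x‖⁻¹ • (y - x)), fderiv ℝ w y v⟫ = deriv φ (‖y - x‖ / r) *
        ⟪fderiv ℝ u y (‖y - x‖⁻¹ • (y - x)), fderiv ℝ u y v⟫ := by
    intro y
    by_cases hy : y ∈ closedBall x r
    · rw [(hwu y (hsub hy)).fderiv_eq]
    · have h1 : 1 < ‖y - x‖ / r := by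
        rw [mem_closedBall, dist_eq_norm, not_le] at hy
        rwa [one_lt_div hr]
      have : φ =ᶠ[nhds (‖y - x‖ / r)] fun _ => 0 := by
        filter_upwards [lt_mem_nhds h1] with s hs using hφ0 s hs.le
      rw [this.deriv_eq]
      simp
  simp only [hint] at main
  refine main.congr_of_eventuallyEq ?_
  have hcont : Filter.Tendsto (fun t : ℝ => ‖t • v‖) (nhds 0) (nhds 0) := by
    have : Continuous fun t : ℝ => ‖t • v‖ := by fun_prop
    simpa using this.tendsto 0
  filter_upwards [hcont.eventually (gt_mem_nhds (show 0 < δ / 2 by positivity))] with t ht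
  unfold Dphi
  congr 1
  ext y
  by_cases hy : r ≤ ‖y - (x + t • v)‖
  · rw [hφ0 _ (by rwa [one_le_div hr])]
    simp
  · have : y ∈ ball x (r + δ / 2) := by
      rw [mem_ball, dist_eq_norm]
      calc ‖y - x‖ = ‖(y - (x + t • v)) + t • v‖ := by congr 1; abel
        _ ≤ _ := norm_add_le _ _
        _ < _ := by linarith
    simp only [gradSq, (hwu y this).fderiv_eq]
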